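/- Let f₁, f₂ : ℝ → ℝ be continuous, let ρ₁, ρ₂ : ℝ → ℝ be continuous and antitone (nonincreasing), and fix s_K, s_L ∈ ℝ. Then the interface operator Ψ(q) = G f₁ (s_K, ρ₁(q)) + G f₂ (s_L, ρ₂(q)) is continuous and monotone nondecreasing on ℝ. -/

import Mathlib

/-- The Godunov numerical flux: minimum of `f` over `[a,b]` when `a ≤ b`,
maximum of `f` over `[b,a]` when `b < a`. -/
noncomputable def godunov (f : ℝ → ℝ) (a b : ℝ) : ℝ :=
  if a ≤ b then sInf (f '' Set.Icc a b) else sSup (f '' Set.Icc b a)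

/-!
The segment from `a` to `b` is the image of `[0, 1]` under `AffineMap.lineMap a b`, so the extrema
of `f` over it are extrema over a fixed compact set of a function depending continuously on
`(a, b)`; the minimum and the maximum agree on the diagonal, where the two branches of the flux are
glued. Moving `b` to the right enlarges the interval under the minimum while `a ≤ b` and shrinks
the interval under the maximum while `b ≤ a`; both decrease the flux.
-/

section Segment

variable {E α : Type*} [AddCommGroup E] [Module ℝ E] [TopologicalSpace E] [ContinuousAdd E]
  [ContinuousSMul ℝ E] [ConditionallyCompleteLinearOrder α] [TopologicalSpace α] [OrderTopology α]
  {f : E → α}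

theorem continuous_sSup_image_segment (hf : Continuous f) :
    Continuous fun p : E × E => sSup (f '' segment ℝ p.1 p.2) := by
  have hline : Continuous ↿fun (p : E × E) (t : ℝ) => f (AffineMap.lineMap p.1 p.2 t) := by
    simp only [Function.HasUncurry.uncurry, id, AffineMap.lineMap_apply_module]
    fun_prop
  simpa only [segment_eq_image_lineMap, Set.image_image] using
    (isCompact_Icc (a := (0 : ℝ)) (b := 1)).continuous_sSup hline

theorem continuous_sInf_image_segment (hf : Continuous f) :
    Continuous fun p : E × E => sInf (f '' segment ℝ p.1 p.2) :=
  continuous_sSup_image_segment (α := αᵒᵈ) hf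

end Segment

section Godunov

variable {f : ℝ → ℝ} {a b : ℝ}

theorem godunov_of_le (h : a ≤ b) : godunov f a b = sInf (f '' Set.Icc a b) :=
  if_pos h

theorem godunov_of_ge (h : b ≤ a) : godunov f a b = sSup (f '' Set.Icc b a) := by
  obtain rfl | hlt := h.eq_or_lt
  · simp [godunov]
  · exact if_neg hlt.not_ge

theorem godunov_eq_ite_segment (f : ℝ → ℝ) (a b : ℝ) :
    godunov f a b =
      if a ≤ b then sInf (f '' segment ℝ a b) else sSup (f '' segment ℝ a b) := by
  split_ifs with h
  · rw [godunov_of_le h, segment_eq_Icc h]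
  · have hba : b ≤ a := (not_le.mp h).le
    rw [godunov_of_ge hba, segment_symm, segment_eq_Icc hba]

theorem continuous_uncurry_godunov (hf : Continuous f) :
    Continuous (Function.uncurry (godunov f)) := by
  have hglue (p : ℝ × ℝ) (hp : p.1 = p.2) :
      sInf (f '' segment ℝ p.1 p.2) = sSup (f '' segment ℝ p.1 p.2) := by
    rw [hp, segment_same, Set.image_singleton, csInf_singleton, csSup_singleton]
  exact ((continuous_sInf_image_segment hf).if_le (continuous_sSup_image_segment hf)
    continuous_fst continuous_snd hglue).congr fun p => (godunov_eq_ite_segment f p.1 p.2).symm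

theorem antitoneOn_godunov_Ici (hf : ∀ b, BddBelow (f '' Set.Icc a b)) :
    AntitoneOn (godunov f a) (Set.Ici a) := by
  intro b hab c hac hbc
  rw [godunov_of_le hab, godunov_of_le hac]
  exact csInf_le_csInf (hf c) ((Set.nonempty_Icc.2 hab).image f)
    (Set.image_mono (Set.Icc_subset_Icc_right hbc))

theorem antitoneOn_godunov_Iic (hf : ∀ b, BddAbove (f '' Set.Icc b a)) :
    AntitoneOn (godunov f a) (Set.Iic a) := by
  intro b hba c hca hbc
  rw [godunov_of_ge hba, godunov_of_ge hca]
  exact csSup_le_csSup (hf b) ((Set.nonempty_Icc.2 hca).image f)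
    (Set.image_mono (Set.Icc_subset_Icc_left hbc))

theorem antitone_godunov (hf : Continuous f) (a : ℝ) : Antitone (godunov f a) :=
  (antitoneOn_godunov_Iic fun _ => isCompact_Icc.bddAbove_image hf.continuousOn).Iic_union_Ici
    (antitoneOn_godunov_Ici fun _ => isCompact_Icc.bddBelow_image hf.continuousOn)

end Godunov

theorem interface_operator_continuous_monotone_general {X : Type*} [TopologicalSpace X] [Preorder X]
    {f₁ f₂ : ℝ → ℝ} {ρ₁ ρ₂ : X → ℝ} (hf₁ : Continuous f₁) (hf₂ : Continuous f₂)
    (hρ₁c : Continuous ρ₁) (hρ₂c : Continuous ρ₂) (hρ₁ : Antitone ρ₁) (hρ₂ : Antitone ρ₂)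
    (sK sL : ℝ) :
    Continuous (fun q => godunov f₁ sK (ρ₁ q) + godunov f₂ sL (ρ₂ q)) ∧
    Monotone (fun q => godunov f₁ sK (ρ₁ q) + godunov f₂ sL (ρ₂ q)) :=
  ⟨((continuous_uncurry_godunov hf₁).comp₂ continuous_const hρ₁c).add
      ((continuous_uncurry_godunov hf₂).comp₂ continuous_const hρ₂c),
    ((antitone_godunov hf₁ sK).comp hρ₁).add ((antitone_godunov hf₂ sL).comp hρ₂)⟩

/-- The interface operator
`Ψ(q) = G f₁ (s_K, ρ₁(q)) + G f₂ (s_L, ρ₂(q))` built from Godunov fluxes and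
continuous antitone functions `ρᵢ` (inverse capillary-pressure curves) is
continuous and monotone nondecreasing on `ℝ`. -/
theorem interface_operator_continuous_monotone
    (f₁ f₂ ρ₁ ρ₂ : ℝ → ℝ)
    (hf₁ : Continuous f₁) (hf₂ : Continuous f₂)
    (hρ₁c : Continuous ρ₁) (hρ₂c : Continuous ρ₂)
    (hρ₁ : Antitone ρ₁) (hρ₂ : Antitone ρ₂)
    (sK sL : ℝ) :
    Continuous (fun q => godunov f₁ sK (ρ₁ q) + godunov f₂ sL (ρ₂ q)) ∧
    Monotone (fun q => godunov f₁ sK (ρ₁ q) + godunov f₂ sL (ρ₂ q)) :=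
  interface_operator_continuous_monotone_general hf₁ hf₂ hρ₁c hρ₂c hρ₁ hρ₂ sK sL
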